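/- Suppose f(z) = ∑_{n≥0} c_n zⁿ with all c_n ∈ ℤ, the series converges for |z| < 1, and f extends to a meromorphic (holomorphic on an open set strictly containing the closed unit disk minus finitely many points, say) function as a solution of a linear ODE f'(z) = A(z) f(z) with A(z) a matrix of rational functions regular for |z| < 1 (vector-valued version). Then f is a rational function. (Corollary of the Carlson–Pólya theorem: a power series with integer coefficients convergent on the unit disk that continues analytically past the unit circle is rational.) -/

import Mathlib

/-!
A linear system `F' = A F` can be solved across every boundary point `ζ` of the unit disk at which
`A` is regular, so `f = F_i` extends holomorphically to the union `D` of the disk and a small ball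
around some such `ζ`. This `D` contains the image of the closed unit disk under a holomorphic map
`φ` with `φ 0 = 0` and `|φ' 0| > 1`.

Let `C` be the matrix whose `i`-th row lists the coefficients of `φ ^ i`, and `H` the `n × n` Hankel
matrix of the coefficients of `f`, i.e. of `(x f x - y f y) / (x - y)`. Pulling this kernel back
along `φ × φ` gives a bounded function on the bidisk with coefficient matrix `Cᵀ H C`, so Cauchy's
estimates yield `|det H| * |φ' 0| ^ (n * (n - 1)) ≤ n! * M ^ n`. For large `n` the integer `det H`
then has absolute value less than `1`, hence vanishes, and by Kronecker's criterion `f` is rational.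
-/

open Filter Metric Set Topology

section MaclaurinSeries

/-- The Taylor series at `0` of a complex function, as a formal power series. -/
noncomputable def maclaurinSeries (h : ℂ → ℂ) : PowerSeries ℂ :=
  PowerSeries.mk fun n => iteratedDeriv n h 0 / n.factorial

theorem coeff_maclaurinSeries (h : ℂ → ℂ) (n : ℕ) :
    PowerSeries.coeff n (maclaurinSeries h) = iteratedDeriv n h 0 / n.factorial :=
  PowerSeries.coeff_mk n _

theorem constantCoeff_maclaurinSeries (h : ℂ → ℂ) :
    PowerSeries.constantCoeff (maclaurinSeries h) = h 0 := by
  simp [← PowerSeries.coeff_zero_eq_constantCoeff_apply, coeff_maclaurinSeries]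

theorem maclaurinSeries_eq_mk_of_hasSum {a : ℕ → ℂ} {f : ℂ → ℂ}
    (hf : ∀ᶠ z in 𝓝 0, HasSum (fun n => a n * z ^ n) (f z)) :
    maclaurinSeries f = PowerSeries.mk a := by
  have hp : HasFPowerSeriesAt f (FormalMultilinearSeries.ofScalars ℂ a) 0 := by
    simpa only [hasFPowerSeriesAt_iff, FormalMultilinearSeries.coeff_ofScalars, zero_add,
      smul_eq_mul, mul_comm] using hf
  have hseries := hp.analyticAt.hasFPowerSeriesAt.eq_formalMultilinearSeries hp
  ext n
  simpa only [FormalMultilinearSeries.coeff_ofScalars, coeff_maclaurinSeries, PowerSeries.coeff_mk]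
    using congrArg (FormalMultilinearSeries.coeff · n) hseries

theorem maclaurinSeries_polynomial_eval (p : Polynomial ℂ) :
    maclaurinSeries (fun z => p.eval z) = (p : PowerSeries ℂ) := by
  refine maclaurinSeries_eq_mk_of_hasSum (Eventually.of_forall fun z => ?_)
  rw [Polynomial.eval_eq_sum, Polynomial.sum_def]
  exact hasSum_sum_of_ne_finset_zero fun n hn => by
    rw [Polynomial.notMem_support_iff.1 hn, zero_mul]

theorem maclaurinSeries_const (c : ℂ) :
    maclaurinSeries (fun _ => c) = PowerSeries.C c := by
  simpa using maclaurinSeries_polynomial_eval (Polynomial.C c)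

variable {f g : ℂ → ℂ}

theorem analyticAt_dslope (hf : AnalyticAt ℂ f 0) : AnalyticAt ℂ (dslope f 0) 0 :=
  hf.hasFPowerSeriesAt.has_fpower_series_dslope_fslope.analyticAt

theorem maclaurinSeries_add (hf : AnalyticAt ℂ f 0) (hg : AnalyticAt ℂ g 0) :
    maclaurinSeries (fun z => f z + g z) = maclaurinSeries f + maclaurinSeries g := by
  ext n
  rw [map_add, coeff_maclaurinSeries, coeff_maclaurinSeries, coeff_maclaurinSeries,
    iteratedDeriv_fun_add hf.contDiffAt hg.contDiffAt, add_div]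

theorem maclaurinSeries_mul (hf : AnalyticAt ℂ f 0) (hg : AnalyticAt ℂ g 0) :
    maclaurinSeries (fun z => f z * g z) = maclaurinSeries f * maclaurinSeries g := by
  ext n
  rw [coeff_maclaurinSeries, iteratedDeriv_fun_mul hf.contDiffAt hg.contDiffAt,
    PowerSeries.coeff_mul, Finset.Nat.sum_antidiagonal_eq_sum_range_succ_mk, Finset.sum_div]
  refine Finset.sum_congr rfl fun k hk => ?_
  rw [coeff_maclaurinSeries, coeff_maclaurinSeries,
    Nat.cast_choose ℂ (Finset.mem_range_succ_iff.1 hk)]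
  have := Nat.factorial_ne_zero n
  field_simp

theorem maclaurinSeries_const_mul (c : ℂ) (hf : AnalyticAt ℂ f 0) :
    maclaurinSeries (fun z => c * f z) = PowerSeries.C c * maclaurinSeries f := by
  rw [maclaurinSeries_mul analyticAt_const hf, maclaurinSeries_const]

theorem maclaurinSeries_fun_sum {ι : Type*} {s : Finset ι} {f : ι → ℂ → ℂ}
    (hf : ∀ i ∈ s, AnalyticAt ℂ (f i) 0) :
    maclaurinSeries (fun z => ∑ i ∈ s, f i z) = ∑ i ∈ s, maclaurinSeries (f i) := by
  ext n
  simp only [map_sum, coeff_maclaurinSeries,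
    iteratedDeriv_fun_sum fun i hi => (hf i hi).contDiffAt, Finset.sum_div]

theorem eqOn_ball_of_maclaurinSeries_eq {r : ℝ} (hf : DifferentiableOn ℂ f (ball 0 r))
    (hg : DifferentiableOn ℂ g (ball 0 r)) (h : maclaurinSeries f = maclaurinSeries g) :
    EqOn f g (ball 0 r) := by
  have hcoeff (n : ℕ) : iteratedDeriv n f 0 = iteratedDeriv n g 0 := by
    have := congrArg (PowerSeries.coeff n) h
    rwa [coeff_maclaurinSeries, coeff_maclaurinSeries,
      div_left_inj' (Nat.cast_ne_zero.2 n.factorial_ne_zero)] at this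
  intro z hz
  have hfz := Complex.hasSum_taylorSeries_on_ball hf hz
  simp only [hcoeff] at hfz
  exact hfz.unique (Complex.hasSum_taylorSeries_on_ball hg hz)

theorem norm_coeff_maclaurinSeries_le {C : ℝ} (hf : DifferentiableOn ℂ f (closedBall 0 1))
    (hC : ∀ z ∈ sphere (0 : ℂ) 1, ‖f z‖ ≤ C) (n : ℕ) :
    ‖PowerSeries.coeff n (maclaurinSeries f)‖ ≤ C := by
  have hCauchy := Complex.norm_iteratedDeriv_le_of_forall_mem_sphere_norm_le n one_pos
    (hf.mono closure_ball_subset_closedBall).diffContOnCl hC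
  rw [coeff_maclaurinSeries, norm_div, Complex.norm_natCast,
    div_le_iff₀ (by exact_mod_cast n.factorial_pos), mul_comm]
  simpa using hCauchy

theorem X_sub_C_mul_maclaurinSeries_dslope {x : ℂ} (hf : AnalyticAt ℂ (dslope f x) 0) :
    (PowerSeries.X - PowerSeries.C x) * maclaurinSeries (dslope f x) =
      maclaurinSeries f - PowerSeries.C (f x) := by
  have hfx : f = fun y => (y - x) * dslope f x y + f x := by
    funext y
    linear_combination -(sub_smul_dslope f x y)
  have hcoe : ((Polynomial.X - Polynomial.C x : Polynomial ℂ) : PowerSeries ℂ) =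
      PowerSeries.X - PowerSeries.C x := by
    rw [← Polynomial.coeToPowerSeries.ringHom_apply, map_sub]
    simp
  have hX : maclaurinSeries (fun y => y - x) = PowerSeries.X - PowerSeries.C x := by
    simpa only [Polynomial.eval_sub, Polynomial.eval_X, Polynomial.eval_C] using
      (maclaurinSeries_polynomial_eval (Polynomial.X - Polynomial.C x)).trans hcoe
  conv_rhs =>
    rw [hfx, maclaurinSeries_add (by fun_prop) analyticAt_const,
      maclaurinSeries_mul (by fun_prop) hf, hX, maclaurinSeries_const]
  simp

theorem maclaurinSeries_eq_X_mul_dslope_add (hf : AnalyticAt ℂ f 0) :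
    maclaurinSeries f =
      PowerSeries.X * maclaurinSeries (dslope f 0) + PowerSeries.C (f 0) := by
  have hdslope := X_sub_C_mul_maclaurinSeries_dslope (analyticAt_dslope hf)
  rw [map_zero, sub_zero] at hdslope
  rw [hdslope, sub_add_cancel]

theorem coeff_maclaurinSeries_iterate_dslope (hf : AnalyticAt ℂ f 0) (n k : ℕ) :
    PowerSeries.coeff k (maclaurinSeries ((Function.swap dslope 0)^[n] f)) =
      PowerSeries.coeff (k + n) (maclaurinSeries f) := by
  induction n generalizing f with
  | zero => rfl
  | succ n ih =>
    rw [Function.iterate_succ_apply, ih (analyticAt_dslope hf), ← add_assoc,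
      maclaurinSeries_eq_X_mul_dslope_add hf, map_add, PowerSeries.coeff_succ_X_mul]
    simp

theorem maclaurinSeries_dslope {x : ℂ} (hf : AnalyticAt ℂ f 0)
    (hfx : AnalyticAt ℂ (dslope f x) 0) :
    maclaurinSeries (dslope f x) =
      PowerSeries.mk fun n => (Function.swap dslope 0)^[n + 1] f x := by
  have hX : (PowerSeries.X - PowerSeries.C x : PowerSeries ℂ) ≠ 0 := fun h => by
    simpa using congrArg (PowerSeries.coeff 1) h
  have hstep (n : ℕ) : (Function.swap dslope 0)^[n] f x =
      PowerSeries.coeff n (maclaurinSeries f) + x * (Function.swap dslope 0)^[n + 1] f x := by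
    have hcoeff := coeff_maclaurinSeries_iterate_dslope hf n 0
    rw [PowerSeries.coeff_zero_eq_constantCoeff_apply, constantCoeff_maclaurinSeries,
      zero_add] at hcoeff
    rw [← hcoeff, Function.iterate_succ_apply']
    linear_combination -(sub_smul_dslope ((Function.swap dslope 0)^[n] f) 0 x)
  refine mul_left_cancel₀ hX ((X_sub_C_mul_maclaurinSeries_dslope hfx).trans ?_)
  ext n
  rw [sub_mul, map_sub, map_sub, PowerSeries.coeff_C_mul, PowerSeries.coeff_mk]
  cases n with
  | zero =>
    rw [PowerSeries.coeff_zero_X_mul, PowerSeries.coeff_zero_C]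
    have hzero : f x = _ := hstep 0
    linear_combination -hzero
  | succ n =>
    rw [PowerSeries.coeff_succ_X_mul, PowerSeries.coeff_mk, PowerSeries.coeff_succ_C]
    linear_combination -(hstep (n + 1))

theorem X_pow_dvd_maclaurinSeries_comp_sub {φ : ℂ → ℂ} (hφ : AnalyticAt ℂ φ 0) (hφ0 : φ 0 = 0)
    (hf : AnalyticAt ℂ f 0) (n : ℕ) :
    PowerSeries.X ^ n ∣ maclaurinSeries (fun u => f (φ u)) - ∑ i ∈ Finset.range n,
      PowerSeries.C (PowerSeries.coeff i (maclaurinSeries f)) * maclaurinSeries φ ^ i := by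
  induction n generalizing f with
  | zero => simp
  | succ n ih =>
    have hdslope := analyticAt_dslope hf
    have hcomp : maclaurinSeries (fun u => f (φ u)) =
        maclaurinSeries φ * maclaurinSeries (fun u => dslope f 0 (φ u)) + PowerSeries.C (f 0) := by
      have : (fun u => f (φ u)) = fun u => φ u * dslope f 0 (φ u) + f 0 := by
        funext u
        linear_combination -(sub_smul_dslope f 0 (φ u))
      have hdφ : AnalyticAt ℂ (fun u => dslope f 0 (φ u)) 0 :=
        AnalyticAt.fun_comp (by rwa [hφ0]) hφ
      rw [this, maclaurinSeries_add (by fun_prop) analyticAt_const, maclaurinSeries_mul hφ hdφ,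
        maclaurinSeries_const]
    have hXφ : PowerSeries.X ∣ maclaurinSeries φ :=
      PowerSeries.X_dvd_iff.2 (by rw [constantCoeff_maclaurinSeries, hφ0])
    have hcoeff (i : ℕ) : PowerSeries.coeff (i + 1) (maclaurinSeries f) =
        PowerSeries.coeff i (maclaurinSeries (dslope f 0)) :=
      (coeff_maclaurinSeries_iterate_dslope hf 1 i).symm
    rw [pow_succ']
    convert mul_dvd_mul hXφ (ih hdslope) using 1
    rw [hcomp, Finset.sum_range_succ', mul_sub, Finset.mul_sum,
      PowerSeries.coeff_zero_eq_constantCoeff_apply, constantCoeff_maclaurinSeries]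
    simp only [hcoeff, pow_succ', mul_left_comm, pow_zero, mul_one]
    ring

theorem coeff_maclaurinSeries_comp {φ : ℂ → ℂ} (hφ : AnalyticAt ℂ φ 0) (hφ0 : φ 0 = 0)
    (hf : AnalyticAt ℂ f 0) {k n : ℕ} (hk : k < n) :
    PowerSeries.coeff k (maclaurinSeries fun u => f (φ u)) = ∑ i ∈ Finset.range n,
      PowerSeries.coeff i (maclaurinSeries f) * PowerSeries.coeff k (maclaurinSeries φ ^ i) := by
  have hsub := PowerSeries.X_pow_dvd_iff.1 (X_pow_dvd_maclaurinSeries_comp_sub hφ hφ0 hf n) k hk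
  simpa only [map_sub, map_sum, PowerSeries.coeff_C_mul, sub_eq_zero] using hsub

end MaclaurinSeries

section HankelDeterminant

/-- The `n × n` Hankel matrix `(a (i + j))` of a sequence `a`. -/
def hankelMatrix {R : Type*} (a : ℕ → R) (n : ℕ) : Matrix (Fin n) (Fin n) R :=
  Matrix.of fun i j => a (i + j)

/-- The truncated Carleman matrix of a power series `p`: its `i`-th row holds the first `n`
coefficients of `p ^ i`. It represents the composition operator `f ↦ f ∘ p` on coefficients. -/
noncomputable def carlemanMatrix {R : Type*} [CommRing R] (p : PowerSeries R) (n : ℕ) :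
    Matrix (Fin n) (Fin n) R :=
  Matrix.of fun i k => PowerSeries.coeff k (p ^ (i : ℕ))

theorem det_carlemanMatrix {R : Type*} [CommRing R] {p : PowerSeries R}
    (hp : PowerSeries.constantCoeff p = 0) (n : ℕ) :
    (carlemanMatrix p n).det = PowerSeries.coeff 1 p ^ ∑ i ∈ Finset.range n, i := by
  obtain ⟨q, rfl⟩ := PowerSeries.X_dvd_iff.2 hp
  have hq : PowerSeries.coeff 1 (PowerSeries.X * q) = PowerSeries.constantCoeff q :=
    (PowerSeries.coeff_succ_X_mul 0 q).trans (PowerSeries.coeff_zero_eq_constantCoeff_apply q)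
  rw [Matrix.det_of_isUpperTriangular, ← Finset.prod_pow_eq_pow_sum, Finset.prod_range]
  · refine Finset.prod_congr rfl fun i _ => ?_
    simp [carlemanMatrix, mul_pow, PowerSeries.coeff_X_pow_mul', hq]
  · intro i j (hij : j < i)
    simp [carlemanMatrix, mul_pow, PowerSeries.coeff_X_pow_mul', hij]

theorem exists_norm_dslope_le_of_isCompact {E : Type*} [NormedAddCommGroup E] [NormedSpace ℂ E]
    [CompleteSpace E] {f : ℂ → E} {D K : Set ℂ} (hD : IsOpen D) (hf : DifferentiableOn ℂ f D)
    (hK : IsCompact K) (hKD : K ⊆ D) : ∃ M : ℝ, ∀ x ∈ K, ∀ y ∈ K, ‖dslope f x y‖ ≤ M := by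
  have hlip : LocallyLipschitzOn K f := fun x hx => by
    have hfx : ContDiffAt ℂ 1 f x := (hf.analyticAt (hD.mem_nhds (hKD hx))).contDiffAt
    obtain ⟨C, t, ht, hC⟩ := hfx.exists_lipschitzOnWith
    exact ⟨C, t, mem_nhdsWithin_of_mem_nhds ht, hC⟩
  obtain ⟨C, hC⟩ := hlip.exists_lipschitzOnWith_of_compact hK
  obtain ⟨M, hM⟩ := hK.exists_bound_of_continuousOn
    ((hf.deriv hD).continuousOn.mono hKD)
  refine ⟨max C M, fun x hx y hy => ?_⟩
  rcases eq_or_ne y x with rfl | hyx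
  · rw [dslope_same]
    exact (hM y hy).trans (le_max_right _ _)
  · rw [dslope_of_ne _ hyx, slope_def_module, norm_smul, norm_inv,
      inv_mul_le_iff₀ (norm_pos_iff.2 (sub_ne_zero.2 hyx)), mul_comm]
    have hdist := hC.dist_le_mul y hy x hx
    rw [dist_eq_norm, dist_eq_norm] at hdist
    exact hdist.trans (by gcongr; exact le_max_left _ _)

variable {f φ : ℂ → ℂ}

theorem coeff_maclaurinSeries_dslope_comp {x : ℂ} (hφ : AnalyticAt ℂ φ 0) (hφ0 : φ 0 = 0)
    (hf : AnalyticAt ℂ f 0) (hfx : AnalyticAt ℂ (dslope f x) 0) {l n : ℕ} (hl : l < n) :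
    PowerSeries.coeff l (maclaurinSeries fun v => dslope f x (φ v)) = ∑ j ∈ Finset.range n,
      (Function.swap dslope 0)^[j + 1] f x * PowerSeries.coeff l (maclaurinSeries φ ^ j) := by
  rw [coeff_maclaurinSeries_comp hφ hφ0 hfx hl, maclaurinSeries_dslope hf hfx]
  simp only [PowerSeries.coeff_mk]

theorem coeff_maclaurinSeries_sum_mul_iterate_dslope (hf : AnalyticAt ℂ f 0) (t : ℕ → ℂ)
    (s : Finset ℕ) (n : ℕ) :
    PowerSeries.coeff n
        (maclaurinSeries fun x => ∑ j ∈ s, t j * (Function.swap dslope 0)^[j + 1] f x) =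
      ∑ j ∈ s, t j * PowerSeries.coeff (n + j + 1) (maclaurinSeries f) := by
  have hiter (j : ℕ) : AnalyticAt ℂ ((Function.swap dslope 0)^[j + 1] f) 0 :=
    (hf.hasFPowerSeriesAt.has_fpower_series_iterate_dslope_fslope (j + 1)).analyticAt
  rw [maclaurinSeries_fun_sum fun j _ => analyticAt_const.fun_mul (hiter j), map_sum]
  refine Finset.sum_congr rfl fun j _ => ?_
  rw [maclaurinSeries_const_mul _ (hiter j), PowerSeries.coeff_C_mul,
    coeff_maclaurinSeries_iterate_dslope hf, add_assoc]

theorem differentiableOn_iterate_dslope {D : Set ℂ} (hD : D ∈ 𝓝 0) (hf : DifferentiableOn ℂ f D)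
    (n : ℕ) : DifferentiableOn ℂ ((Function.swap dslope 0)^[n] f) D := by
  induction n with
  | zero => exact hf
  | succ n ih =>
    rw [Function.iterate_succ_apply']
    exact (Complex.differentiableOn_dslope hD).2 ih

theorem norm_carlemanMatrix_transpose_mul_hankelMatrix_mul_le {D : Set ℂ} {M : ℝ} (hD : IsOpen D)
    (hf : DifferentiableOn ℂ f D) (hφ : DifferentiableOn ℂ φ (closedBall 0 1)) (hφ0 : φ 0 = 0)
    (hφD : MapsTo φ (closedBall 0 1) D)
    (hM : ∀ u ∈ closedBall 0 1, ∀ v ∈ closedBall 0 1, ‖dslope f (φ u) (φ v)‖ ≤ M)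
    {n : ℕ} (k l : Fin n) :
    ‖((carlemanMatrix (maclaurinSeries φ) n).transpose *
      (hankelMatrix (fun m => PowerSeries.coeff (m + 1) (maclaurinSeries f)) n *
        carlemanMatrix (maclaurinSeries φ) n)) k l‖ ≤ M := by
  -- The entries are the coefficients of `u ^ k * v ^ l` in `(f (φ u) - f (φ v)) / (φ u - φ v)`,
  -- which is holomorphic on the closed bidisk: apply Cauchy's estimate in `v`, then in `u`.
  have hD0 : D ∈ 𝓝 0 := hD.mem_nhds (hφ0 ▸ hφD (mem_closedBall_self zero_le_one))
  have hφa : AnalyticAt ℂ φ 0 := hφ.analyticAt (closedBall_mem_nhds 0 one_pos)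
  have hfa : AnalyticAt ℂ f 0 := hf.analyticAt hD0
  set t : ℕ → ℂ := fun j => PowerSeries.coeff (l : ℕ) (maclaurinSeries φ ^ j)
  set W : ℂ → ℂ := fun x => ∑ j ∈ Finset.range n, t j * (Function.swap dslope 0)^[j + 1] f x
  have hWd : DifferentiableOn ℂ W D := DifferentiableOn.fun_sum fun j _ =>
    (differentiableOn_iterate_dslope hD0 hf (j + 1)).const_mul (t j)
  have hentry : ((carlemanMatrix (maclaurinSeries φ) n).transpose *
      (hankelMatrix (fun m => PowerSeries.coeff (m + 1) (maclaurinSeries f)) n *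
        carlemanMatrix (maclaurinSeries φ) n)) k l =
      PowerSeries.coeff (k : ℕ) (maclaurinSeries fun u => W (φ u)) := by
    rw [coeff_maclaurinSeries_comp hφa hφ0 (hWd.analyticAt hD0) k.2, Finset.sum_range]
    simp_rw [W, coeff_maclaurinSeries_sum_mul_iterate_dslope hfa]
    simp only [Matrix.mul_apply, Matrix.transpose_apply, hankelMatrix, carlemanMatrix,
      Matrix.of_apply, Finset.sum_range, mul_comm, t]
  rw [hentry]
  refine norm_coeff_maclaurinSeries_le (hWd.comp hφ hφD) (fun u hu => ?_) k
  have hu1 : u ∈ closedBall 0 1 := sphere_subset_closedBall hu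
  have hdslope : DifferentiableOn ℂ (dslope f (φ u)) D :=
    (Complex.differentiableOn_dslope (hD.mem_nhds (hφD hu1))).2 hf
  have hW : W (φ u) =
      PowerSeries.coeff (l : ℕ) (maclaurinSeries fun v => dslope f (φ u) (φ v)) := by
    rw [coeff_maclaurinSeries_dslope_comp hφa hφ0 hfa (hdslope.analyticAt hD0) l.2]
    exact Finset.sum_congr rfl fun j _ => mul_comm _ _
  rw [Function.comp_apply, hW]
  exact norm_coeff_maclaurinSeries_le (hdslope.comp hφ hφD)
    (fun v hv => hM u hu1 v (sphere_subset_closedBall hv)) l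

theorem exists_norm_det_hankelMatrix_succ_mul_pow_le {D : Set ℂ} (hD : IsOpen D)
    (hf : DifferentiableOn ℂ f D) (hφ : DifferentiableOn ℂ φ (closedBall 0 1)) (hφ0 : φ 0 = 0)
    (hφD : MapsTo φ (closedBall 0 1) D) :
    ∃ M : ℝ, ∀ n : ℕ,
      ‖(hankelMatrix (fun m => PowerSeries.coeff (m + 1) (maclaurinSeries f)) n).det‖ *
        ‖deriv φ 0‖ ^ (n * (n - 1)) ≤ n.factorial * M ^ n := by
  obtain ⟨M, hM⟩ := exists_norm_dslope_le_of_isCompact hD hf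
    ((isCompact_closedBall (0 : ℂ) 1).image_of_continuousOn hφ.continuousOn) hφD.image_subset
  refine ⟨M, fun n => ?_⟩
  have hdetC : (carlemanMatrix (maclaurinSeries φ) n).det =
      deriv φ 0 ^ ∑ i ∈ Finset.range n, i := by
    rw [det_carlemanMatrix (by rw [constantCoeff_maclaurinSeries, hφ0]), coeff_maclaurinSeries]
    simp
  have hdet := Matrix.det_le (abv := NormedField.toAbsoluteValue ℂ)
    (norm_carlemanMatrix_transpose_mul_hankelMatrix_mul_le (n := n) hD hf hφ hφ0 hφD
      fun u hu v hv => hM _ (mem_image_of_mem φ hu) _ (mem_image_of_mem φ hv))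
  rw [Matrix.det_mul, Matrix.det_mul, Matrix.det_transpose, hdetC, Fintype.card_fin,
    nsmul_eq_mul] at hdet
  refine le_of_eq_of_le ?_ hdet
  rw [← Finset.sum_range_id_mul_two, pow_mul]
  simp only [NormedField.toAbsoluteValue, AbsoluteValue.coe_mk, MulHom.coe_mk, norm_mul, norm_pow]
  ring

theorem eventually_factorial_mul_pow_lt (M : ℝ) {r : ℝ} (hr : 1 < r) :
    ∀ᶠ n : ℕ in atTop, n.factorial * M ^ n < r ^ (n * (n - 1)) := by
  have : 0 < r := one_pos.trans hr
  have hlin : ∀ᶠ n : ℕ in atTop, n * |M| < r ^ (n - 1) := by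
    have hlim := (tendsto_pow_const_div_const_pow_of_one_lt 1 hr).const_mul (|M| * r)
    rw [mul_zero] at hlim
    filter_upwards [hlim.eventually_lt_const one_pos, eventually_ge_atTop 1] with n hn hn1
    obtain ⟨k, rfl⟩ := Nat.exists_eq_add_of_le' hn1
    rw [pow_one, pow_succ, mul_div_assoc', div_lt_one (by positivity)] at hn
    rw [Nat.add_sub_cancel]
    nlinarith
  filter_upwards [hlin, eventually_ge_atTop 1] with n hn hn1
  calc n.factorial * M ^ n ≤ n.factorial * |M| ^ n := by
        rw [← abs_pow]
        gcongr
        exact le_abs_self _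
    _ ≤ (n : ℝ) ^ n * |M| ^ n := by
        gcongr
        exact_mod_cast Nat.factorial_le_pow n
    _ = (n * |M|) ^ n := (mul_pow _ _ _).symm
    _ < (r ^ (n - 1)) ^ n := by gcongr
    _ = r ^ (n * (n - 1)) := by rw [← pow_mul, mul_comm]

theorem eventually_det_hankelMatrix_eq_zero {c : ℕ → ℤ} {D : Set ℂ} (hD : IsOpen D)
    (hf : DifferentiableOn ℂ f D) (hc : maclaurinSeries f = PowerSeries.mk fun n => (c n : ℂ))
    (hφ : DifferentiableOn ℂ φ (closedBall 0 1)) (hφ0 : φ 0 = 0) (hφ1 : 1 < ‖deriv φ 0‖)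
    (hφD : MapsTo φ (closedBall 0 1) D) :
    ∀ᶠ n in atTop, (hankelMatrix c n).det = 0 := by
  have hf0 : AnalyticAt ℂ f 0 :=
    hf.analyticAt (hD.mem_nhds (hφ0 ▸ hφD (mem_closedBall_self zero_le_one)))
  have hXf : maclaurinSeries (fun z => z * f z) =
      PowerSeries.X * PowerSeries.mk fun n => (c n : ℂ) := by
    rw [maclaurinSeries_mul (f := fun z => z) analyticAt_id hf0, hc]
    congr 1
    simpa using maclaurinSeries_polynomial_eval Polynomial.X
  obtain ⟨M, hM⟩ := exists_norm_det_hankelMatrix_succ_mul_pow_le (f := fun z => z * f z) hD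
    (differentiableOn_id.fun_mul hf) hφ hφ0 hφD
  filter_upwards [eventually_factorial_mul_pow_lt M hφ1] with n hn
  have hdet : (hankelMatrix (fun m => PowerSeries.coeff (m + 1)
      (maclaurinSeries fun z => z * f z)) n).det = ((hankelMatrix c n).det : ℤ) := by
    simp only [hXf, PowerSeries.coeff_succ_X_mul, PowerSeries.coeff_mk]
    exact ((Int.castRingHom ℂ).map_det (hankelMatrix c n)).symm
  have hlt := (hM n).trans_lt hn
  rw [hdet, mul_lt_iff_lt_one_left (by positivity), Complex.norm_intCast] at hlt
  exact Int.abs_lt_one_iff.1 (by exact_mod_cast hlt)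

end HankelDeterminant

section Kronecker

open Polynomial

/-- The linear functional on polynomials with moments `a`, i.e. `X ^ n ↦ a n`. -/
noncomputable def momentFunctional {R : Type*} [CommSemiring R] (a : ℕ → R) : R[X] →ₗ[R] R :=
  lsum fun n => LinearMap.toSpanSingleton R R (a n)

theorem momentFunctional_mul_X_pow {R : Type*} [CommSemiring R] (a : ℕ → R) {p : R[X]} {n : ℕ}
    (hn : p.natDegree < n) (i : ℕ) :
    momentFunctional a (p * X ^ i) = ∑ j ∈ Finset.range n, a (i + j) * p.coeff j := by
  conv_lhs => rw [p.as_sum_range' n hn, Finset.sum_mul, map_sum]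
  refine Finset.sum_congr rfl fun j _ => ?_
  simp [momentFunctional, lsum_apply, add_comm, mul_comm]

theorem coeff_reverse_mul_mk {R : Type*} [CommSemiring R] (a : ℕ → R) (p : R[X]) :
    PowerSeries.coeff p.natDegree ((p.reverse : PowerSeries R) * PowerSeries.mk a) =
      momentFunctional a p := by
  have hp := momentFunctional_mul_X_pow a p.natDegree.lt_succ_self 0
  rw [pow_zero, mul_one] at hp
  rw [hp, mul_comm, PowerSeries.coeff_mul, Finset.Nat.sum_antidiagonal_eq_sum_range_succ_mk]
  refine Finset.sum_congr rfl fun j hj => ?_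
  have hjp : j ≤ p.natDegree := Finset.mem_range_succ_iff.1 hj
  rw [PowerSeries.coeff_mk, Polynomial.coeff_coe, coeff_reverse, revAt_le (Nat.sub_le _ _),
    Nat.sub_sub_self hjp, zero_add]

variable {K : Type*} [Field K] {a : ℕ → K}

theorem momentFunctional_mul_eq_zero {p s : K[X]} {n : ℕ}
    (h : ∀ i < n, momentFunctional a (p * X ^ i) = 0) (hs : s.degree < n) :
    momentFunctional a (p * s) = 0 := by
  rw [s.as_sum_support_C_mul_X_pow, Finset.mul_sum, map_sum]
  refine Finset.sum_eq_zero fun i hi => ?_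
  have hin : i < n := by exact_mod_cast (le_degree_of_mem_supp i hi).trans_lt hs
  rw [mul_left_comm, ← smul_eq_C_mul, map_smul, h i hin, smul_zero]

theorem det_hankelMatrix_eq_zero_iff {n : ℕ} :
    (hankelMatrix a n).det = 0 ↔
      ∃ v : K[X], v ≠ 0 ∧ v.degree < n ∧ ∀ i < n, momentFunctional a (v * X ^ i) = 0 := by
  classical
  have hmulVec {v : K[X]} (hv : v.degree < n) (i : Fin n) :
      Matrix.mulVec (hankelMatrix a n) (toFn n v) i = momentFunctional a (v * X ^ (i : ℕ)) := by
    have hvn : v.natDegree < n := by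
      rcases eq_or_ne v 0 with rfl | hv0
      · simpa using i.pos
      · exact (natDegree_lt_iff_degree_lt hv0).2 hv
    rw [momentFunctional_mul_X_pow a hvn, Finset.sum_range]
    simp [Matrix.mulVec, dotProduct, hankelMatrix, toFn]
  rw [← Matrix.exists_mulVec_eq_zero_iff]
  constructor
  · rintro ⟨v, hv0, hv⟩
    refine ⟨ofFn n v, ?_, ofFn_degree_lt v, fun i hi => ?_⟩
    · simpa using (injective_ofFn n).ne hv0
    · rw [← hmulVec (ofFn_degree_lt v) ⟨i, hi⟩, toFn_comp_ofFn_eq_id, hv, Pi.zero_apply]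
  · rintro ⟨v, hv0, hvd, hv⟩
    refine ⟨toFn n v, fun h => hv0 ?_, funext fun i => (hmulVec hvd i).trans (hv i i.2)⟩
    ext i
    rcases lt_or_ge i n with hi | hi
    · exact congrFun h ⟨i, hi⟩
    · exact coeff_eq_zero_of_degree_lt (hvd.trans_le (by exact_mod_cast hi))

theorem exists_monic_momentFunctional_mul_eq_zero {p : ℕ} (hp : (hankelMatrix a p).det ≠ 0)
    (hp1 : (hankelMatrix a (p + 1)).det = 0) :
    ∃ q : K[X], q.Monic ∧ q.natDegree = p ∧ ∀ i < p + 1, momentFunctional a (q * X ^ i) = 0 := by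
  obtain ⟨v, hv0, hvd, hv⟩ := det_hankelMatrix_eq_zero_iff.1 hp1
  refine ⟨v * C v.leadingCoeff⁻¹, monic_mul_leadingCoeff_inv hv0, ?_, fun i hi => ?_⟩
  · rw [natDegree_mul_leadingCoeff_inv v hv0]
    refine le_antisymm (Nat.lt_succ_iff.1 ((natDegree_lt_iff_degree_lt hv0).2 hvd)) ?_
    by_contra! hlt
    exact hp (det_hankelMatrix_eq_zero_iff.2
      ⟨v, hv0, (natDegree_lt_iff_degree_lt hv0).1 hlt, fun i hi => hv i (hi.trans p.lt_succ_self)⟩)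
  · rw [mul_right_comm, mul_comm, ← smul_eq_C_mul, map_smul, hv i hi, smul_zero]

theorem exists_degree_eq_momentFunctional_mul_eq_zero {q : K[X]} (hq : q.Monic)
    (hdet : (hankelMatrix a q.natDegree).det ≠ 0) {m : ℕ} (hm : q.natDegree ≤ m)
    (hqm : ∀ i < m, momentFunctional a (q * X ^ i) = 0) (hdetm : (hankelMatrix a (m + 1)).det = 0) :
    ∃ s : K[X], s.degree = m ∧ momentFunctional a (q * s) = 0 := by
  obtain ⟨v, hv0, hvd, hv⟩ := det_hankelMatrix_eq_zero_iff.1 hdetm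
  have hvm : v.natDegree ≤ m := Nat.lt_succ_iff.1 ((natDegree_lt_iff_degree_lt hv0).2 hvd)
  have hdiv : (v /ₘ q).natDegree = v.natDegree - q.natDegree := natDegree_divByMonic v hq
  have hmod : v %ₘ q = 0 := by
    by_contra hr0
    refine hdet (det_hankelMatrix_eq_zero_iff.2
      ⟨v %ₘ q, hr0, (degree_modByMonic_lt v hq).trans_le degree_le_natDegree, fun i hi => ?_⟩)
    have hqs : momentFunctional a (q * (v /ₘ q * X ^ i)) = 0 := by
      refine momentFunctional_mul_eq_zero hqm (degree_le_natDegree.trans_lt ?_)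
      have := natDegree_mul_le (p := v /ₘ q) (q := X ^ i)
      rw [natDegree_X_pow] at this
      exact_mod_cast (by omega : (v /ₘ q * X ^ i).natDegree < m)
    rw [modByMonic_eq_sub_mul_div v q, sub_mul, map_sub, hv i (by omega), mul_assoc, hqs,
      sub_zero]
  have hvq : q * (v /ₘ q) = v := by
    simpa [hmod] using modByMonic_add_div v q
  have hs0 : v /ₘ q ≠ 0 := by
    rintro h
    exact hv0 (by rw [← hvq, h, mul_zero])
  refine ⟨v /ₘ q * X ^ (m - (v /ₘ q).natDegree), ?_, ?_⟩
  · rw [degree_eq_natDegree (mul_ne_zero hs0 (pow_ne_zero _ X_ne_zero)), natDegree_mul_X_pow _ hs0]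
    exact congrArg _ (by omega)
  · rw [← mul_assoc, hvq]
    exact hv _ (by omega)

theorem exists_momentFunctional_mul_X_pow_eq_zero
    (ha : ∀ᶠ n in atTop, (hankelMatrix a n).det = 0) :
    ∃ q : K[X], q ≠ 0 ∧ ∀ i, momentFunctional a (q * X ^ i) = 0 := by
  obtain ⟨p, hp, hpmax⟩ : ∃ p, (hankelMatrix a p).det ≠ 0 ∧
      ∀ n, p < n → (hankelMatrix a n).det = 0 := by
    classical
    have hN := eventually_atTop.1 ha
    obtain ⟨p, hp⟩ : ∃ p, Nat.find hN = p + 1 := Nat.exists_eq_succ_of_ne_zero fun h => by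
      simpa using Nat.find_spec hN 0 h.le
    refine ⟨p, fun h => ?_, fun n hn => Nat.find_spec hN n (by omega)⟩
    refine Nat.find_min hN (by omega : p < _) fun n hn => ?_
    rcases hn.eq_or_lt with rfl | hn
    · exact h
    · exact Nat.find_spec hN n (by omega)
  obtain ⟨q, hq, rfl, hqp⟩ :=
    exists_monic_momentFunctional_mul_eq_zero hp (hpmax _ p.lt_succ_self)
  refine ⟨q, hq.ne_zero, fun i => ?_⟩
  induction i using Nat.strong_induction_on with
  | _ m ih =>
    rcases lt_or_ge m (q.natDegree + 1) with hm | hm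
    · exact hqp m hm
    obtain ⟨s, hsm, hs⟩ := exists_degree_eq_momentFunctional_mul_eq_zero hq hp
      (Nat.le_of_succ_le hm) ih (hpmax _ (by omega))
    have hs0 : s ≠ 0 := by
      rintro rfl
      simp at hsm
    have hlead := s.eraseLead_add_C_mul_X_pow
    rw [natDegree_eq_of_degree_eq_some hsm] at hlead
    rw [← hlead, mul_add, map_add, momentFunctional_mul_eq_zero ih
      ((degree_eraseLead_lt hs0).trans_eq hsm), zero_add, mul_left_comm, ← smul_eq_C_mul,
      map_smul] at hs
    exact (smul_eq_zero.1 hs).resolve_left (leadingCoeff_ne_zero.2 hs0)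

theorem exists_mul_mk_eq_of_eventually_det_hankelMatrix_eq_zero
    (ha : ∀ᶠ n in atTop, (hankelMatrix a n).det = 0) :
    ∃ p q : K[X], q ≠ 0 ∧ (q : PowerSeries K) * PowerSeries.mk a = p := by
  obtain ⟨q, hq0, hq⟩ := exists_momentFunctional_mul_X_pow_eq_zero ha
  refine ⟨PowerSeries.trunc q.natDegree (q.reverse * PowerSeries.mk a), q.reverse,
    reverse_eq_zero.not.2 hq0, ?_⟩
  ext n
  rw [Polynomial.coeff_coe, PowerSeries.coeff_trunc]
  split_ifs with hn
  · rfl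
  · obtain ⟨i, rfl⟩ := Nat.exists_eq_add_of_le (not_lt.1 hn)
    rw [← natDegree_mul_X_pow i hq0, ← reverse_mul_X_pow q i, coeff_reverse_mul_mk, hq]

end Kronecker

section BulgeMap

theorem re_inv_one_sub {w : ℂ} (hw : w ≠ 1) :
    ((1 - w)⁻¹).re = 1 / 2 + (1 - ‖w‖ ^ 2) / (2 * ‖1 - w‖ ^ 2) := by
  have hnormSq : Complex.normSq (1 - w) ≠ 0 :=
    Complex.normSq_eq_zero.not.2 (sub_ne_zero.2 hw.symm)
  rw [Complex.inv_re, Complex.sq_norm, Complex.sq_norm]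
  field_simp
  simp only [Complex.normSq_apply, Complex.sub_re, Complex.sub_im, Complex.one_re, Complex.one_im]
  ring

/-- A perturbation of the identity which expands at `0` and, for small `e`, pushes the closed unit
disk into the open one except for a bulge of size `O(e)` near `1`. With `w` slightly inside the
disk, `Re (1 - w)⁻¹` is `1` at `w = 0` and close to `1 / 2` for `|w|` near `1` away from `w = 1`;
the constant `3 / 4` separates the two values. -/
noncomputable def bulgeMap (e : ℝ) (u : ℂ) : ℂ :=
  u * Complex.exp ((e ^ 3 / 50 : ℝ) * ((1 - (1 - e ^ 2 / 20 : ℝ) * u)⁻¹ - 3 / 4))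

variable {e : ℝ} {u : ℂ}

theorem sq_div_le_norm_one_sub_mul (he : 0 < e) (he1 : e ≤ 1) (hu : ‖u‖ ≤ 1) :
    e ^ 2 / 20 ≤ ‖1 - (1 - e ^ 2 / 20 : ℝ) * u‖ := by
  have hρ : 0 ≤ 1 - e ^ 2 / 20 := by nlinarith
  calc e ^ 2 / 20 ≤ ‖(1 : ℂ)‖ - ‖((1 - e ^ 2 / 20 : ℝ) : ℂ) * u‖ := by
        rw [norm_one, norm_mul, Complex.norm_real, Real.norm_of_nonneg hρ]
        nlinarith
    _ ≤ _ := norm_sub_norm_le _ _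

theorem sq_le_norm_one_sub_mul_sq (he : 0 < e) (he1 : e ≤ 1) (hu : ‖u‖ ≤ 1) (hue : e ≤ ‖u - 1‖) :
    9 / 10 * e ^ 2 ≤ ‖1 - (1 - e ^ 2 / 20 : ℝ) * u‖ ^ 2 := by
  have htri : ‖u - 1‖ ≤ ‖1 - (1 - e ^ 2 / 20 : ℝ) * u‖ + ‖((e ^ 2 / 20 : ℝ) : ℂ) * u‖ := by
    rw [← norm_neg (u - 1)]
    refine (norm_sub_le _ _).trans_eq' (congrArg norm ?_)
    push_cast
    ring
  rw [norm_mul, Complex.norm_real, Real.norm_of_nonneg (by positivity)] at htri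
  have : 19 / 20 * e ≤ ‖1 - (1 - e ^ 2 / 20 : ℝ) * u‖ := by nlinarith
  nlinarith

theorem mul_re_inv_one_sub_mul_lt (he : 0 < e) (he1 : e ≤ 1) (hu : ‖u‖ ≤ 1) (hue : e ≤ ‖u - 1‖) :
    e ^ 3 / 50 * (((1 - (1 - e ^ 2 / 20 : ℝ) * u)⁻¹).re - 3 / 4) < (1 - ‖u‖ ^ 2) / 2 := by
  have hsub := sq_le_norm_one_sub_mul_sq he he1 hu hue
  set w : ℂ := (1 - e ^ 2 / 20 : ℝ) * u with hw
  have hw1 : w ≠ 1 := by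
    rintro h
    rw [h, sub_self, norm_zero] at hsub
    nlinarith
  have hx1 : ‖u‖ ^ 2 ≤ 1 := pow_le_one₀ (norm_nonneg u) hu
  have hnorm : 1 - ‖w‖ ^ 2 ≤ 1 - ‖u‖ ^ 2 + e ^ 2 / 10 := by
    rw [hw, norm_mul, mul_pow, Complex.norm_real, Real.norm_eq_abs, sq_abs]
    nlinarith [sq_nonneg (e ^ 2), sq_nonneg ‖u‖]
  have hfrac : (1 - ‖w‖ ^ 2) / (2 * ‖1 - w‖ ^ 2) ≤
      (1 - ‖u‖ ^ 2 + e ^ 2 / 10) / (2 * (9 / 10 * e ^ 2)) := by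
    have : 0 ≤ 1 - ‖u‖ ^ 2 + e ^ 2 / 10 := by nlinarith
    gcongr
  calc e ^ 3 / 50 * (((1 - w)⁻¹).re - 3 / 4)
      ≤ e ^ 3 / 50 * (1 / 2 + (1 - ‖u‖ ^ 2 + e ^ 2 / 10) / (2 * (9 / 10 * e ^ 2)) - 3 / 4) := by
        rw [re_inv_one_sub hw1]
        gcongr
    _ = (1 - ‖u‖ ^ 2) * (e / 90) - e ^ 3 * (7 / 1800) := by
        field_simp
        ring
    _ < (1 - ‖u‖ ^ 2) / 2 := by nlinarith [pow_pos he 3]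

theorem norm_bulgeMap_lt_one (he : 0 < e) (he1 : e ≤ 1) (hu : ‖u‖ ≤ 1) (hue : e ≤ ‖u - 1‖) :
    ‖bulgeMap e u‖ < 1 := by
  rcases eq_or_ne u 0 with rfl | hu0
  · simp [bulgeMap]
  refine (sq_lt_one_iff₀ (norm_nonneg _)).1 ?_
  calc ‖bulgeMap e u‖ ^ 2
      = ‖u‖ ^ 2 * Real.exp
          (2 * (e ^ 3 / 50 * (((1 - (1 - e ^ 2 / 20 : ℝ) * u)⁻¹).re - 3 / 4))) := by
        rw [bulgeMap, norm_mul, Complex.norm_exp, mul_pow, ← Real.exp_nat_mul,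
          Complex.re_ofReal_mul, Complex.sub_re]
        norm_num
    _ < ‖u‖ ^ 2 * Real.exp (1 - ‖u‖ ^ 2) := by
        gcongr
        linarith [mul_re_inv_one_sub_mul_lt he he1 hu hue]
    _ ≤ Real.exp (‖u‖ ^ 2 - 1) * Real.exp (1 - ‖u‖ ^ 2) := by
        gcongr
        linarith [Real.add_one_le_exp (‖u‖ ^ 2 - 1)]
    _ = 1 := by
        rw [← Real.exp_add]
        simp

theorem norm_bulgeMap_sub_one_lt (he : 0 < e) (he1 : e ≤ 1) (hu : ‖u‖ ≤ 1) (hue : ‖u - 1‖ < e) :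
    ‖bulgeMap e u - 1‖ < 2 * e := by
  set s : ℂ := (e ^ 3 / 50 : ℝ) * ((1 - (1 - e ^ 2 / 20 : ℝ) * u)⁻¹ - 3 / 4) with hs
  have hs_le : ‖s‖ ≤ 21 / 50 * e := by
    have hinv : ‖(1 - (1 - e ^ 2 / 20 : ℝ) * u)⁻¹‖ ≤ 20 / e ^ 2 := by
      rw [norm_inv]
      exact (inv_anti₀ (by positivity) (sq_div_le_norm_one_sub_mul he he1 hu)).trans_eq
        (inv_div _ _)
    calc ‖s‖ ≤ e ^ 3 / 50 * (20 / e ^ 2 + 1) := by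
          rw [hs, norm_mul, Complex.norm_real, Real.norm_of_nonneg (by positivity)]
          gcongr
          refine (norm_sub_le _ _).trans (add_le_add hinv ?_)
          norm_num
      _ = 20 / 50 * e + e ^ 2 / 50 * e := by
          field_simp
      _ ≤ 21 / 50 * e := by nlinarith
  calc ‖bulgeMap e u - 1‖ = ‖(u - 1) + u * (Complex.exp s - 1)‖ := by
        rw [bulgeMap, ← hs]
        ring_nf
    _ ≤ ‖u - 1‖ + ‖u‖ * ‖Complex.exp s - 1‖ := by
        rw [← norm_mul]
        exact norm_add_le _ _
    _ ≤ ‖u - 1‖ + 1 * (2 * ‖s‖) := by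
        gcongr
        exact Complex.norm_exp_sub_one_le (by linarith)
    _ < 2 * e := by linarith

theorem differentiableAt_bulgeMap (he : 0 < e) (he1 : e ≤ 1) (hu : ‖u‖ ≤ 1) :
    DifferentiableAt ℂ (bulgeMap e) u := by
  have hne : 1 - (1 - e ^ 2 / 20 : ℝ) * u ≠ 0 :=
    norm_pos_iff.1 (lt_of_lt_of_le (by positivity) (sq_div_le_norm_one_sub_mul he he1 hu))
  unfold bulgeMap
  fun_prop (disch := assumption)

theorem deriv_bulgeMap_zero (e : ℝ) : deriv (bulgeMap e) 0 = Complex.exp (e ^ 3 / 200 : ℝ) := by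
  have hne : 1 - (1 - e ^ 2 / 20 : ℝ) * (0 : ℂ) ≠ 0 := by simp
  unfold bulgeMap
  rw [deriv_fun_mul differentiableAt_fun_id (by fun_prop (disch := assumption))]
  simp only [deriv_id'', mul_zero, sub_zero, inv_one, zero_mul, one_mul, add_zero]
  push_cast
  ring_nf

theorem exists_differentiableOn_mapsTo_ball_union_ball {ζ : ℂ} (hζ : ‖ζ‖ = 1) {ε : ℝ}
    (hε : 0 < ε) :
    ∃ φ : ℂ → ℂ, DifferentiableOn ℂ φ (closedBall 0 1) ∧ φ 0 = 0 ∧ 1 < ‖deriv φ 0‖ ∧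
      MapsTo φ (closedBall 0 1) (ball 0 1 ∪ ball ζ ε) := by
  obtain ⟨e, he, hemin⟩ := exists_between (lt_min one_pos (half_pos hε))
  obtain ⟨he1, heε⟩ := lt_min_iff.1 hemin
  refine ⟨fun u => ζ * bulgeMap e u, fun u hu => ?_, by simp [bulgeMap], ?_, fun u hu => ?_⟩
  · exact ((differentiableAt_bulgeMap he he1.le
      (mem_closedBall_zero_iff.1 hu)).const_mul ζ).differentiableWithinAt
  · rw [deriv_const_mul_field, norm_mul, hζ, one_mul, deriv_bulgeMap_zero, Complex.norm_exp,
      Complex.ofReal_re, Real.one_lt_exp_iff]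
    positivity
  · rw [mem_closedBall_zero_iff] at hu
    rcases le_or_gt e ‖u - 1‖ with hue | hue
    · left
      rw [mem_ball_zero_iff, norm_mul, hζ, one_mul]
      exact norm_bulgeMap_lt_one he he1.le hu hue
    · right
      rw [mem_ball_iff_norm, show ζ * bulgeMap e u - ζ = ζ * (bulgeMap e u - 1) by ring, norm_mul,
        hζ, one_mul]
      linarith [norm_bulgeMap_sub_one_lt he he1.le hu hue]

end BulgeMap

section CarlsonPolya

open Polynomial

theorem exists_differentiableOn_union_ball {𝕜 E F : Type*} [NontriviallyNormedField 𝕜]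
    [NormedAddCommGroup E] [NormedSpace 𝕜 E] [NormedAddCommGroup F] [NormedSpace 𝕜 F]
    [CompleteSpace F] {f g : E → F} {D : Set E} {x : E} (hD : IsOpen D)
    (hf : DifferentiableOn 𝕜 f D) (hg : AnalyticAt 𝕜 g x) (hfg : f =ᶠ[𝓝[D] x] g) :
    ∃ ε > 0, ∃ h : E → F, EqOn h f D ∧ DifferentiableOn 𝕜 h (D ∪ ball x ε) := by
  classical
  obtain ⟨ε, hε, hball⟩ := Metric.eventually_nhds_iff_ball.1
    (hg.eventually_analyticAt.and (eventually_nhdsWithin_iff.1 hfg))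
  have hpf : EqOn (D.piecewise f g) f D := D.piecewise_eqOn f g
  have hpg : EqOn (D.piecewise f g) g (ball x ε) := fun y hy => by
    by_cases hyD : y ∈ D
    · rw [piecewise_eq_of_mem _ _ _ hyD, (hball y hy).2 hyD]
    · rw [piecewise_eq_of_notMem _ _ _ hyD]
  have hgd : DifferentiableOn 𝕜 g (ball x ε) := fun y hy =>
    (hball y hy).1.differentiableAt.differentiableWithinAt
  exact ⟨ε, hε, D.piecewise f g, hpf,
    (hf.congr hpf).union_of_isOpen (hgd.congr hpg) hD isOpen_ball⟩

theorem differentiableOn_ball_of_hasSum {a : ℕ → ℂ} {f : ℂ → ℂ} {r : ℝ}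
    (hf : ∀ z ∈ ball 0 r, HasSum (fun n => a n * z ^ n) (f z)) :
    DifferentiableOn ℂ f (ball 0 r) := by
  have htsum : DifferentiableOn ℂ (fun z => ∑' n, a n * z ^ n) (ball 0 r) := fun z hz => by
    obtain ⟨s, hzs, hsr⟩ := exists_between (mem_ball_zero_iff.1 hz)
    have hs : 0 ≤ s := (norm_nonneg z).trans hzs.le
    have hsum : Summable fun n => ‖a n‖ * s ^ n := by
      have hs_mem : (s : ℂ) ∈ ball 0 r := by
        rwa [mem_ball_zero_iff, Complex.norm_real, Real.norm_of_nonneg hs]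
      simpa [abs_of_nonneg hs] using (hf s hs_mem).summable.norm
    have hdiff : DifferentiableOn ℂ (fun z => ∑' n, a n * z ^ n) (ball 0 s) := by
      refine Complex.differentiableOn_tsum_of_summable_norm hsum (fun n => by fun_prop)
        isOpen_ball fun n w hw => ?_
      rw [norm_mul, norm_pow]
      gcongr
      exact (mem_ball_zero_iff.1 hw).le
    exact (hdiff.differentiableAt
      (isOpen_ball.mem_nhds (mem_ball_zero_iff.2 hzs))).differentiableWithinAt
  exact htsum.congr fun z hz => (hf z hz).tsum_eq.symm

theorem mul_aeval_eq_aeval_of_mul_mk_eq {R : Type*} [CommSemiring R] [Algebra R ℂ] {a : ℕ → R}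
    {p q : R[X]} {f : ℂ → ℂ} {r : ℝ} (hr : 0 < r) (hpq : (q : PowerSeries R) * PowerSeries.mk a = p)
    (hf : ∀ z ∈ ball 0 r, HasSum (fun n => algebraMap R ℂ (a n) * z ^ n) (f z)) :
    ∀ z ∈ ball 0 r, f z * aeval z q = aeval z p := by
  have hfd : DifferentiableOn ℂ f (ball 0 r) := differentiableOn_ball_of_hasSum hf
  have hfa : maclaurinSeries f = PowerSeries.map (algebraMap R ℂ) (PowerSeries.mk a) :=
    maclaurinSeries_eq_mk_of_hasSum (eventually_of_mem (ball_mem_nhds 0 hr) hf)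
  simp only [← eval_map_algebraMap]
  refine eqOn_ball_of_maclaurinSeries_eq
    (hfd.fun_mul (Polynomial.differentiable _).differentiableOn)
    (Polynomial.differentiable _).differentiableOn ?_
  rw [maclaurinSeries_mul (hfd.analyticAt (ball_mem_nhds 0 hr))
    ((Polynomial.differentiable _).analyticAt 0), maclaurinSeries_polynomial_eval,
    maclaurinSeries_polynomial_eval, hfa, mul_comm, polynomial_map_coe, polynomial_map_coe,
    ← map_mul, hpq]

theorem carlson_polya {c : ℕ → ℤ} {f g : ℂ → ℂ} {ζ : ℂ}
    (hf : ∀ z ∈ ball 0 1, HasSum (fun n => (c n : ℂ) * z ^ n) (f z)) (hζ : ‖ζ‖ = 1)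
    (hg : AnalyticAt ℂ g ζ) (hfg : f =ᶠ[𝓝[ball 0 1] ζ] g) :
    ∃ p q : ℚ[X], q ≠ 0 ∧ ∀ z ∈ ball 0 1, f z * aeval z q = aeval z p := by
  obtain ⟨ε, hε, h, hhf, hh⟩ := exists_differentiableOn_union_ball isOpen_ball
    (differentiableOn_ball_of_hasSum hf) hg hfg
  obtain ⟨φ, hφ, hφ0, hφ1, hφD⟩ := exists_differentiableOn_mapsTo_ball_union_ball hζ hε
  have hhc : maclaurinSeries h = PowerSeries.mk fun n => (c n : ℂ) :=
    maclaurinSeries_eq_mk_of_hasSum (eventually_of_mem (ball_mem_nhds 0 one_pos) fun z hz => by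
      rw [hhf hz]
      exact hf z hz)
  have hdet : ∀ᶠ n in atTop, (hankelMatrix (fun n => (c n : ℚ)) n).det = 0 := by
    filter_upwards [eventually_det_hankelMatrix_eq_zero (isOpen_ball.union isOpen_ball) hh hhc hφ
      hφ0 hφ1 hφD] with n hn
    rw [← Int.cast_zero, ← hn]
    exact ((Int.castRingHom ℚ).map_det (hankelMatrix c n)).symm
  obtain ⟨p, q, hq0, hpq⟩ := exists_mul_mk_eq_of_eventually_det_hankelMatrix_eq_zero hdet
  exact ⟨p, q, hq0, mul_aeval_eq_aeval_of_mul_mk_eq one_pos hpq (by simpa using hf)⟩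

end CarlsonPolya

section LinearODE

variable {E : Type*} [NormedAddCommGroup E] [NormedSpace ℂ E]

theorem summable_mul_pow_of_succ_mul_le_sum {b : ℕ → ℝ} {K x : ℝ} (hb : ∀ n, 0 ≤ b n)
    (hx : 0 ≤ x) (hx1 : x < 1)
    (hrec : ∀ n : ℕ, (n + 1) * b (n + 1) ≤ K * ∑ k ∈ Finset.range (n + 1), b k) :
    Summable fun n => b n * x ^ n := by
  set S : ℕ → ℝ := fun n => ∑ k ∈ Finset.range (n + 1), b k
  have hS0 (n : ℕ) : 0 ≤ S n := Finset.sum_nonneg fun k _ => hb k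
  have hbS (n : ℕ) : b n ≤ S n :=
    Finset.single_le_sum (f := b) (fun k _ => hb k) (Finset.self_mem_range_succ n)
  have hSsucc (n : ℕ) : S (n + 1) ≤ (1 + K / (n + 1)) * S n := by
    have hbn : b (n + 1) ≤ K * S n / (n + 1) := by
      rw [le_div_iff₀ (by positivity), mul_comm]
      exact hrec n
    calc S (n + 1) = S n + b (n + 1) := Finset.sum_range_succ b (n + 1)
      _ ≤ S n + K * S n / (n + 1) := by gcongr
      _ = (1 + K / (n + 1)) * S n := by ring
  have hratio : Tendsto (fun n : ℕ => (1 + K / (n + 1)) * x) atTop (𝓝 x) := by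
    simpa [div_eq_mul_inv] using
      ((tendsto_one_div_add_atTop_nhds_zero_nat.const_mul K).const_add 1).mul_const x
  obtain ⟨y, hxy, hy1⟩ := exists_between hx1
  have hsum : Summable fun n => S n * x ^ n := by
    refine summable_of_ratio_norm_eventually_le hy1 ?_
    filter_upwards [hratio.eventually_le_const hxy] with n hn
    rw [Real.norm_of_nonneg (mul_nonneg (hS0 _) (by positivity)),
      Real.norm_of_nonneg (mul_nonneg (hS0 _) (by positivity))]
    calc S (n + 1) * x ^ (n + 1) ≤ (1 + K / (n + 1)) * S n * x ^ (n + 1) := by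
          gcongr
          exact hSsucc n
      _ = (1 + K / (n + 1)) * x * (S n * x ^ n) := by ring
      _ ≤ y * (S n * x ^ n) := by
          have := hS0 n
          gcongr
  exact hsum.of_nonneg_of_le (fun n => mul_nonneg (hb n) (by positivity)) fun n => by
    gcongr
    exact hbS n

theorem norm_iteratedDeriv_clm_apply_le {𝕜 E F : Type*} [NontriviallyNormedField 𝕜]
    [NormedAddCommGroup E] [NormedSpace 𝕜 E] [NormedAddCommGroup F] [NormedSpace 𝕜 F]
    {A : 𝕜 → E →L[𝕜] F} {f : 𝕜 → E} {z : 𝕜} {n : ℕ}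
    (hA : ContDiffAt 𝕜 n A z) (hf : ContDiffAt 𝕜 n f z) :
    ‖iteratedDeriv n (fun w => A w (f w)) z‖ ≤ ∑ k ∈ Finset.range (n + 1),
      n.choose k * ‖iteratedDeriv k A z‖ * ‖iteratedDeriv (n - k) f z‖ := by
  obtain ⟨U, hU, hUo, hz⟩ := _root_.eventually_nhds_iff.1
    ((hA.eventually (by simp)).and (hf.eventually (by simp)))
  have hAU : ContDiffOn 𝕜 n A U := fun w hw => (hU w hw).1.contDiffWithinAt
  have hfU : ContDiffOn 𝕜 n f U := fun w hw => (hU w hw).2.contDiffWithinAt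
  simpa only [iteratedFDerivWithin_of_isOpen _ hUo hz, norm_iteratedFDeriv_eq_norm_iteratedDeriv]
    using norm_iteratedFDerivWithin_clm_apply hAU hfU hUo.uniqueDiffOn hz le_rfl

theorem succ_mul_norm_iteratedDeriv_le_of_hasDerivAt_clm_apply [CompleteSpace E]
    {A : ℂ → E →L[ℂ] E} {F : ℂ → E} {z₀ : ℂ} {r M : ℝ} (hr : 0 < r)
    (hA : DiffContOnCl ℂ A (ball z₀ r)) (hM : ∀ z ∈ sphere z₀ r, ‖A z‖ ≤ M)
    (hF : ∀ᶠ z in 𝓝 z₀, HasDerivAt F (A z (F z)) z) (n : ℕ) :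
    (n + 1) * (‖iteratedDeriv (n + 1) F z₀‖ / (n + 1).factorial * r ^ (n + 1)) ≤
      M * r * ∑ k ∈ Finset.range (n + 1), ‖iteratedDeriv k F z₀‖ / k.factorial * r ^ k := by
  have hAz : AnalyticAt ℂ A z₀ := hA.differentiableOn.analyticAt (ball_mem_nhds z₀ hr)
  have hFz : AnalyticAt ℂ F z₀ :=
    Complex.analyticAt_iff_eventually_differentiableAt.2 (hF.mono fun z hz => hz.differentiableAt)
  have hderiv : deriv F =ᶠ[𝓝 z₀] fun z => A z (F z) := hF.mono fun z hz => hz.deriv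
  have hCauchy (k : ℕ) : ‖iteratedDeriv k A z₀‖ ≤ k.factorial * M / r ^ k :=
    Complex.norm_iteratedDeriv_le_of_forall_mem_sphere_norm_le k hr hA hM
  have hLeibniz : ‖iteratedDeriv (n + 1) F z₀‖ ≤ ∑ k ∈ Finset.range (n + 1),
      n.choose k * (k.factorial * M / r ^ k) * ‖iteratedDeriv (n - k) F z₀‖ := by
    rw [iteratedDeriv_succ', hderiv.iteratedDeriv_eq n]
    refine (norm_iteratedDeriv_clm_apply_le hAz.contDiffAt hFz.contDiffAt).trans
      (Finset.sum_le_sum fun k _ => ?_)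
    gcongr
    exact hCauchy k
  calc (n + 1) * (‖iteratedDeriv (n + 1) F z₀‖ / (n + 1).factorial * r ^ (n + 1))
      = ‖iteratedDeriv (n + 1) F z₀‖ * (r ^ (n + 1) / n.factorial) := by
        rw [Nat.factorial_succ]
        push_cast
        field_simp
    _ ≤ (∑ k ∈ Finset.range (n + 1), n.choose k * (k.factorial * M / r ^ k) *
          ‖iteratedDeriv (n - k) F z₀‖) * (r ^ (n + 1) / n.factorial) := by gcongr
    _ = ∑ k ∈ Finset.range (n + 1),
          M * r * (‖iteratedDeriv (n - k) F z₀‖ / (n - k).factorial * r ^ (n - k)) := by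
        rw [Finset.sum_mul]
        refine Finset.sum_congr rfl fun k hk => ?_
        have hkn : k ≤ n := Finset.mem_range_succ_iff.1 hk
        rw [← Nat.choose_mul_factorial_mul_factorial hkn,
          show r ^ (n + 1) = r ^ k * r ^ (n - k) * r by rw [← pow_add, ← pow_succ]; congr; omega]
        have := Nat.choose_pos hkn
        push_cast
        field_simp
    _ = M * r * ∑ k ∈ Finset.range (n + 1), ‖iteratedDeriv k F z₀‖ / k.factorial * r ^ k := by
        rw [← Finset.mul_sum]
        exact congrArg (M * r * ·) (Finset.sum_range_reflect
          (fun k => ‖iteratedDeriv k F z₀‖ / k.factorial * r ^ k) (n + 1))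

theorem exists_differentiableOn_ball_of_hasDerivAt_clm_apply [CompleteSpace E]
    {A : ℂ → E →L[ℂ] E} {F : ℂ → E} {z₀ : ℂ} {r : ℝ} (hr : 0 < r)
    (hA : DifferentiableOn ℂ A (closedBall z₀ r))
    (hF : ∀ᶠ z in 𝓝 z₀, HasDerivAt F (A z (F z)) z) :
    ∃ G : ℂ → E, DifferentiableOn ℂ G (ball z₀ r) ∧ F =ᶠ[𝓝 z₀] G := by
  obtain ⟨M, hM⟩ := (isCompact_sphere z₀ r).exists_bound_of_continuousOn
    (hA.continuousOn.mono sphere_subset_closedBall)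
  set t : ℕ → ℂ → E := fun n z =>
    (n.factorial : ℂ)⁻¹ • (z - z₀) ^ n • iteratedDeriv n F z₀ with ht
  refine ⟨fun z => ∑' n, t n z, fun z hz => ?_, ?_⟩
  · obtain ⟨s, hzs, hsr⟩ := exists_between (mem_ball.1 hz)
    have hs : 0 < s := dist_nonneg.trans_lt hzs
    have hsum := summable_mul_pow_of_succ_mul_le_sum
      (b := fun n => ‖iteratedDeriv n F z₀‖ / n.factorial * r ^ n) (fun n => by positivity)
      (div_nonneg hs.le hr.le) ((div_lt_one hr).2 hsr)
      (succ_mul_norm_iteratedDeriv_le_of_hasDerivAt_clm_apply hr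
        (hA.mono closure_ball_subset_closedBall).diffContOnCl hM hF)
    have hdiff : DifferentiableOn ℂ (fun z => ∑' n, t n z) (ball z₀ s) := by
      refine Complex.differentiableOn_tsum_of_summable_norm hsum (fun n => by fun_prop)
        isOpen_ball fun n w hw => ?_
      have hws : ‖w - z₀‖ ≤ s := (mem_ball_iff_norm.1 hw).le
      calc ‖t n w‖ = ‖iteratedDeriv n F z₀‖ / n.factorial * ‖w - z₀‖ ^ n := by
            simp only [ht, norm_smul, norm_inv, norm_pow, Complex.norm_natCast]
            ring
        _ ≤ ‖iteratedDeriv n F z₀‖ / n.factorial * s ^ n := by gcongr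
        _ = ‖iteratedDeriv n F z₀‖ / n.factorial * r ^ n * (s / r) ^ n := by
            rw [div_pow]
            field_simp
    exact (hdiff.differentiableAt (isOpen_ball.mem_nhds hzs)).differentiableWithinAt
  · obtain ⟨ε, hε, hFε⟩ := Metric.eventually_nhds_iff_ball.1 hF
    have hFd : DifferentiableOn ℂ F (ball z₀ ε) := fun z hz =>
      (hFε z hz).differentiableAt.differentiableWithinAt
    filter_upwards [ball_mem_nhds z₀ hε] with z hz
    exact (Complex.hasSum_taylorSeries_on_ball hFd hz).tsum_eq.symm

theorem exists_analyticAt_of_hasDerivAt_clm_apply [CompleteSpace E] {A : ℂ → E →L[ℂ] E}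
    {F : ℂ → E} {D : Set ℂ} {ζ : ℂ} (hDo : IsOpen D) (hD : Convex ℝ D) (hζ : ζ ∈ closure D)
    (hA : AnalyticAt ℂ A ζ) (hF : ∀ᶠ z in 𝓝[D] ζ, HasDerivAt F (A z (F z)) z) :
    ∃ G : ℂ → E, AnalyticAt ℂ G ζ ∧ F =ᶠ[𝓝[D] ζ] G := by
  obtain ⟨δ, hδ, hAF⟩ := Metric.eventually_nhds_iff_ball.1
    (hA.eventually_analyticAt.and (eventually_nhdsWithin_iff.1 hF))
  obtain ⟨z₀, hz₀D, hz₀ζ⟩ := Metric.mem_closure_iff.1 hζ (δ / 3) (by positivity)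
  have hsub : closedBall z₀ (δ / 2) ⊆ ball ζ δ :=
    closedBall_subset_ball' (by rw [dist_comm]; linarith)
  have hFD (z : ℂ) (hz : z ∈ D ∩ ball z₀ (δ / 2)) : HasDerivAt F (A z (F z)) z :=
    (hAF z (hsub (ball_subset_closedBall hz.2))).2 hz.1
  have hVo : IsOpen (D ∩ ball z₀ (δ / 2)) := hDo.inter isOpen_ball
  have hz₀V : z₀ ∈ D ∩ ball z₀ (δ / 2) := ⟨hz₀D, mem_ball_self (by positivity)⟩
  obtain ⟨G, hG, hFG⟩ := exists_differentiableOn_ball_of_hasDerivAt_clm_apply (half_pos hδ)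
    (fun z hz => (hAF z (hsub hz)).1.differentiableAt.differentiableWithinAt)
    (eventually_of_mem (hVo.mem_nhds hz₀V) hFD)
  have hζball : ball z₀ (δ / 2) ∈ 𝓝 ζ := isOpen_ball.mem_nhds (mem_ball.2 (by linarith))
  have heq : EqOn F G (D ∩ ball z₀ (δ / 2)) :=
    AnalyticOnNhd.eqOn_of_preconnected_of_eventuallyEq
      (DifferentiableOn.analyticOnNhd
        (fun z hz => (hFD z hz).differentiableAt.differentiableWithinAt) hVo)
      ((hG.mono inter_subset_right).analyticOnNhd hVo)
      (hD.inter (convex_ball _ _)).isPreconnected hz₀V hFG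
  exact ⟨G, hG.analyticAt hζball,
    eventually_of_mem (inter_mem self_mem_nhdsWithin (mem_nhdsWithin_of_mem_nhds hζball)) heq⟩

end LinearODE

section LinearSystem

open Polynomial

variable {ι : Type*} [Fintype ι]

theorem exists_analyticAt_of_hasDerivAt_sum {a : ι → ι → ℂ → ℂ} {F : ℂ → ι → ℂ} {D : Set ℂ}
    {ζ : ℂ} (hDo : IsOpen D) (hD : Convex ℝ D) (hζ : ζ ∈ closure D)
    (ha : ∀ i j, AnalyticAt ℂ (a i j) ζ)
    (hF : ∀ᶠ z in 𝓝[D] ζ, ∀ i, HasDerivAt (fun w => F w i) (∑ j, a i j z * F z j) z) :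
    ∃ G : ℂ → ι → ℂ, AnalyticAt ℂ G ζ ∧ F =ᶠ[𝓝[D] ζ] G := by
  classical
  set A : ℂ → (ι → ℂ) →L[ℂ] ι → ℂ := fun z => ∑ i, ∑ j, a i j z •
    (ContinuousLinearMap.proj j : (ι → ℂ) →L[ℂ] ℂ).smulRight (Pi.single i (1 : ℂ)) with hA
  have hAa : AnalyticAt ℂ A ζ := by
    fun_prop
  refine exists_analyticAt_of_hasDerivAt_clm_apply hDo hD hζ hAa ?_
  filter_upwards [hF] with z hz
  refine hasDerivAt_pi.2 fun i => (hz i).congr_deriv ?_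
  simp [hA, Pi.single_apply]

theorem exists_norm_eq_one_eval_ne_zero {p : ℂ[X]} (hp : p ≠ 0) :
    ∃ ζ : ℂ, ‖ζ‖ = 1 ∧ p.eval ζ ≠ 0 := by
  have hsphere : (sphere (0 : ℂ) 1).Infinite :=
    (isPreconnected_sphere (by simp [Complex.rank_real_complex]) 0 1).infinite_of_nontrivial
      ⟨1, by simp, -1, by simp, by norm_num⟩
  by_contra! hroot
  exact hp (eq_zero_of_infinite_isRoot p (hsphere.mono fun ζ hζ =>
    hroot ζ (mem_sphere_zero_iff_norm.1 hζ)))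

theorem carlson_polya_ode_rational_general (c : ℕ → ℤ) (F : ℂ → ι → ℂ) (P Q : ι → ι → ℂ[X])
    (hQ0 : ∀ i j, Q i j ≠ 0) (i₀ : ι)
    (hsum : ∀ z : ℂ, ‖z‖ < 1 → HasSum (fun n => (c n : ℂ) * z ^ n) (F z i₀))
    (hode : ∀ z : ℂ, ‖z‖ < 1 → (∀ i j, (Q i j).eval z ≠ 0) → ∀ i,
      HasDerivAt (fun w => F w i) (∑ j, (P i j).eval z / (Q i j).eval z * F z j) z) :
    ∃ p q : ℚ[X], q ≠ 0 ∧ ∀ z : ℂ, ‖z‖ < 1 → F z i₀ * aeval z q = aeval z p := by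
  obtain ⟨ζ, hζ, hζQ⟩ := exists_norm_eq_one_eval_ne_zero
    (Finset.prod_ne_zero_iff.2 fun i _ => Finset.prod_ne_zero_iff.2 fun j _ => hQ0 i j :
      ∏ i, ∏ j, Q i j ≠ 0)
  simp only [eval_prod, Finset.prod_ne_zero_iff, Finset.mem_univ, true_imp_iff] at hζQ
  have hζ_mem : ζ ∈ closure (ball (0 : ℂ) 1) := by
    rw [closure_ball 0 one_ne_zero, mem_closedBall_zero_iff, hζ]
  have hode_near : ∀ᶠ z in 𝓝[ball 0 1] ζ, ∀ i,
      HasDerivAt (fun w => F w i) (∑ j, (P i j).eval z / (Q i j).eval z * F z j) z := by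
    have hQ_near : ∀ᶠ z in 𝓝 ζ, ∀ i j, (Q i j).eval z ≠ 0 :=
      eventually_all.2 fun i => eventually_all.2 fun j =>
        (Q i j).continuous.continuousAt.eventually_ne (hζQ i j)
    filter_upwards [self_mem_nhdsWithin, mem_nhdsWithin_of_mem_nhds hQ_near] with z hz hQz
    exact hode z (mem_ball_zero_iff.1 hz) hQz
  obtain ⟨G, hG, hFG⟩ := exists_analyticAt_of_hasDerivAt_sum isOpen_ball (convex_ball 0 1) hζ_mem
    (fun i j => (P i j).differentiable.analyticAt ζ |>.div ((Q i j).differentiable.analyticAt ζ)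
      (hζQ i j)) hode_near
  have hG₀ : AnalyticAt ℂ (fun z => G z i₀) ζ := analyticAt_pi_iff.1 hG i₀
  simpa only [mem_ball_zero_iff] using carlson_polya (f := fun z => F z i₀)
    (fun z hz => hsum z (mem_ball_zero_iff.1 hz)) hζ hG₀ (hFG.mono fun z hz => congrFun hz i₀)

end LinearSystem

/-- corollary of the Carlson–Pólya theorem: Let
`F = (F_i)` be a vector of power series with integer coefficients `c n i`,
convergent for `|z| < 1`, satisfying a linear ODE `F' = A F` where
`A(z) = (P_{ij}(z)/Q_{ij}(z))` is a matrix of rational functions over `ℚ`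
regular for `|z| < 1`.  Then each component `F_i` is a rational function. -/
theorem carlson_polya_ode_rational {m : ℕ} (c : ℕ → Fin m → ℤ)
    (F : ℂ → Fin m → ℂ) (P Q : Fin m → Fin m → Polynomial ℚ)
    (hQ0 : ∀ i j, Q i j ≠ 0)
    (hQreg : ∀ (i j : Fin m) (z : ℂ), ‖z‖ < 1 →
      ((Q i j).map (algebraMap ℚ ℂ)).eval z ≠ 0)
    (hsum : ∀ (i : Fin m) (z : ℂ), ‖z‖ < 1 →
      HasSum (fun n : ℕ => (c n i : ℂ) * z ^ n) (F z i))
    (hode : ∀ (i : Fin m) (z : ℂ), ‖z‖ < 1 →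
      HasDerivAt (fun w : ℂ => F w i)
        (∑ j : Fin m, ((P i j).map (algebraMap ℚ ℂ)).eval z /
          ((Q i j).map (algebraMap ℚ ℂ)).eval z * F z j) z) :
    ∀ i : Fin m, ∃ p q : Polynomial ℂ, q ≠ 0 ∧
      ∀ z : ℂ, ‖z‖ < 1 → F z i * q.eval z = p.eval z := by
  intro i
  obtain ⟨p, q, hq, hpq⟩ := carlson_polya_ode_rational_general (fun n => c n i) F
    (fun i j => (P i j).map (algebraMap ℚ ℂ)) (fun i j => (Q i j).map (algebraMap ℚ ℂ))
    (fun i j => (Polynomial.map_ne_zero_iff (algebraMap ℚ ℂ).injective).2 (hQ0 i j)) i (hsum i)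
    fun z hz _ j => hode j z hz
  exact ⟨p.map (algebraMap ℚ ℂ), q.map (algebraMap ℚ ℂ),
    (Polynomial.map_ne_zero_iff (algebraMap ℚ ℂ).injective).2 hq, fun z hz => by
      simpa only [Polynomial.eval_map_algebraMap] using hpq z hz⟩
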